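/- Let H be a 2-vertex-connected undirected graph with a DFS tree T rooted at r, let c be a vertex different from r, and let u be a vertex with u ≠ r. (i) If {p(c),(u,p(u))} is a vertex-edge cut-pair of H such that u is an ancestor of p(c) and M(u) is a descendant of c, then M_p(c) = M(u) and high_p(c) is a proper ancestor of u. (ii) Conversely, if u is a proper ancestor of p(c), M_p(c) = M(u), and high_p(c) is a proper ancestor of u, then {p(c),(u,p(u))} is a vertex-edge cut-pair of H. -/

import Mathlib

/-- A DFS tree of the graph `H`, rooted at `r`, given by a parent function:
it is a spanning tree (every vertex reaches the root by iterating the parent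
function, and each non-root vertex is adjacent to its parent), and every edge
of `H` joins a vertex to one of its ancestors. -/
structure DFSTree {V : Type*} (H : SimpleGraph V) (r : V) where
  par : V → V
  par_root : par r = r
  reaches_root : ∀ v : V, ∃ n : ℕ, par^[n] v = r
  par_adj : ∀ v : V, v ≠ r → H.Adj v (par v)
  edge_anc : ∀ x y : V, H.Adj x y → (∃ n : ℕ, par^[n] x = y) ∨ (∃ n : ℕ, par^[n] y = x)

namespace DFSTree

variable {V : Type*} {H : SimpleGraph V} {r : V} (T : DFSTree H r)

/-- `a` is an ancestor of `b` (every vertex is an ancestor of itself). -/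
def Anc (a b : V) : Prop := ∃ n : ℕ, T.par^[n] b = a

/-- `a` is a proper ancestor of `b`. -/
def PAnc (a b : V) : Prop := T.Anc a b ∧ a ≠ b

/-- `(x,y)` is a back-edge: an edge of `H` from `x` to an ancestor `y` of `x`
which is not the tree edge from `x` to its parent. -/
def BackEdge (x y : V) : Prop := H.Adj x y ∧ T.Anc y x ∧ T.par x ≠ y

/-- The set of descendants of `v` joined by a back-edge to a proper ancestor of `v`. -/
def MSet (v : V) : Set V := {x | T.Anc v x ∧ ∃ y, T.PAnc y v ∧ T.BackEdge x y}

/-- `m = M(v)`: `m` is the nearest common ancestor of all descendants of `v`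
joined by a back-edge to a proper ancestor of `v`. -/
def IsM (v m : V) : Prop :=
  (∀ x ∈ T.MSet v, T.Anc m x) ∧ ∀ m' : V, (∀ x ∈ T.MSet v, T.Anc m' x) → T.Anc m' m

/-- The set of descendants of `v` joined by a back-edge to a proper ancestor of `p(v)`. -/
def MpSet (v : V) : Set V := {x | T.Anc v x ∧ ∃ y, T.PAnc y (T.par v) ∧ T.BackEdge x y}

/-- `m = M_p(v)`: `m` is the nearest common ancestor of all descendants of `v`
joined by a back-edge to a proper ancestor of `p(v)`. -/
def IsMp (v m : V) : Prop :=
  (∀ x ∈ T.MpSet v, T.Anc m x) ∧ ∀ m' : V, (∀ x ∈ T.MpSet v, T.Anc m' x) → T.Anc m' m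

/-- `h = high(v)`: `h` is the deepest proper ancestor of `v` joined by a
back-edge to a descendant of `v`. -/
def IsHigh (v h : V) : Prop :=
  T.PAnc h v ∧ (∃ x, T.Anc v x ∧ T.BackEdge x h) ∧
    ∀ h' : V, T.PAnc h' v → (∃ x, T.Anc v x ∧ T.BackEdge x h') → T.Anc h' h

/-- `h = high_p(v)`: `h` is the deepest proper ancestor of `p(v)` joined by a
back-edge to a descendant of `v`. -/
def IsHighP (v h : V) : Prop :=
  T.PAnc h (T.par v) ∧ (∃ x, T.Anc v x ∧ T.BackEdge x h) ∧
    ∀ h' : V, T.PAnc h' (T.par v) → (∃ x, T.Anc v x ∧ T.BackEdge x h') → T.Anc h' h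

/-- `l = low(v)`: `l` is the proper ancestor of `v` nearest to the root joined
by a back-edge to a descendant of `v`. -/
def IsLow (v l : V) : Prop :=
  T.PAnc l v ∧ (∃ x, T.Anc v x ∧ T.BackEdge x l) ∧
    ∀ l' : V, T.PAnc l' v → (∃ x, T.Anc v x ∧ T.BackEdge x l') → T.Anc l l'

end DFSTree

/-- `{v, e}` is a vertex-edge cut-pair of `H`: `e` is an edge of `H` and deleting
both `v` (with its incident edges) and `e` disconnects `H`. -/
def VECutPair {V : Type*} (H : SimpleGraph V) (v : V) (e : Sym2 V) : Prop :=
  e ∈ H.edgeSet ∧ ¬ ((H.deleteEdges {e}).induce {u | u ≠ v}).Connected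

/-- `{e, e'}` is a cut-pair of `H`: `e` and `e'` are distinct edges of `H` whose
deletion disconnects `H`. -/
def ECutPair {V : Type*} (H : SimpleGraph V) (e e' : Sym2 V) : Prop :=
  e ∈ H.edgeSet ∧ e' ∈ H.edgeSet ∧ e ≠ e' ∧ ¬ (H.deleteEdges {e, e'}).Connected

/-- An undirected graph is 2-edge-connected if it is connected and has no bridge. -/
def TwoEdgeConnected {W : Type*} (G : SimpleGraph W) : Prop :=
  G.Connected ∧ ∀ e ∈ G.edgeSet, ¬ G.IsBridge e

/-- An undirected graph is 2-vertex-connected if it has at least three vertices,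
is connected, and deleting any single vertex leaves it connected. -/
def TwoVertexConnected {W : Type*} (G : SimpleGraph W) : Prop :=
  3 ≤ Nat.card W ∧ G.Connected ∧ ∀ v : W, (G.induce {u | u ≠ v}).Connected


namespace DFSTree

variable {V : Type*} {H : SimpleGraph V} {r : V} (T : DFSTree H r)

lemma anc_refl (a : V) : T.Anc a a := ⟨0, rfl⟩

lemma anc_trans {a b c : V} (h1 : T.Anc a b) (h2 : T.Anc b c) : T.Anc a c := by
  obtain ⟨n, rfl⟩ := h1
  obtain ⟨m, rfl⟩ := h2
  exact ⟨n + m, Function.iterate_add_apply _ _ _ _⟩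

lemma anc_par (a : V) : T.Anc (T.par a) a := ⟨1, rfl⟩

lemma iter_root (n : ℕ) : T.par^[n] r = r := Function.iterate_fixed T.par_root n

lemma anc_antisymm {a b : V} (h1 : T.Anc a b) (h2 : T.Anc b a) : a = b := by
  obtain ⟨n, hn⟩ := h1
  obtain ⟨m, hm⟩ := h2
  rcases Nat.eq_zero_or_pos n with h0 | h0
  · subst h0; exact hn.symm
  have hp : T.par^[m + n] b = b := by rw [Function.iterate_add_apply, hn, hm]
  obtain ⟨k, hk⟩ := T.reaches_root b
  have hp2 : T.par^[(m + n) * k] b = b := by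
    rw [Function.iterate_mul]; exact Function.iterate_fixed hp k
  have hle : k ≤ (m + n) * k := Nat.le_mul_of_pos_left _ (by omega)
  obtain ⟨d, hd⟩ := Nat.exists_eq_add_of_le' hle
  rw [hd, Function.iterate_add_apply, hk, T.iter_root] at hp2
  subst hp2
  rw [← hn, T.iter_root]

lemma anc_of_ne {a b : V} (h : T.Anc a b) (hne : a ≠ b) : T.Anc a (T.par b) := by
  obtain ⟨n, hn⟩ := h
  cases n with
  | zero => exact absurd hn.symm hne
  | succ n => exact ⟨n, hn⟩

lemma anc_total {a b x : V} (h1 : T.Anc a x) (h2 : T.Anc b x) : T.Anc a b ∨ T.Anc b a := by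
  obtain ⟨n, rfl⟩ := h1
  obtain ⟨m, rfl⟩ := h2
  rcases le_total n m with h | h
  · obtain ⟨d, rfl⟩ := Nat.exists_eq_add_of_le' h
    right; exact ⟨d, (Function.iterate_add_apply _ _ _ _).symm⟩
  · obtain ⟨d, rfl⟩ := Nat.exists_eq_add_of_le' h
    left; exact ⟨d, (Function.iterate_add_apply _ _ _ _).symm⟩

/-- reachability after deleting `w` and the tree edge of `u` -/
def Q (w u a b : V) : Prop := ∃ (ha : a ≠ w) (hb : b ≠ w),
  ((H.deleteEdges {s(u, T.par u)}).induce {v | v ≠ w}).Reachable ⟨a, ha⟩ ⟨b, hb⟩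

lemma Q_trans {w u a b c : V} (h1 : T.Q w u a b) (h2 : T.Q w u b c) : T.Q w u a c := by
  obtain ⟨ha, hb, h⟩ := h1
  obtain ⟨_, hc, h'⟩ := h2
  exact ⟨ha, hc, h.trans h'⟩

lemma Q_symm {w u a b : V} (h1 : T.Q w u a b) : T.Q w u b a := by
  obtain ⟨ha, hb, h⟩ := h1
  exact ⟨hb, ha, h.symm⟩

lemma Q_adj {w u a b : V} (ha : a ≠ w) (hb : b ≠ w) (h : H.Adj a b)
    (he : s(a, b) ≠ s(u, T.par u)) : T.Q w u a b := by
  refine ⟨ha, hb, SimpleGraph.Adj.reachable ?_⟩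
  simp only [SimpleGraph.comap_adj, SimpleGraph.induce, SimpleGraph.deleteEdges_adj]
  exact ⟨h, he⟩

lemma Q_path {w u a b : V} (h : T.Anc a b)
    (hw : ∀ z, T.Anc a z → T.Anc z b → z ≠ w)
    (hu : ∀ z, T.Anc a z → T.Anc z b → z ≠ a → z ≠ u) : T.Q w u b a := by
  obtain ⟨n, hn⟩ := h
  induction n generalizing b with
  | zero =>
    have : b = a := hn
    subst this
    exact ⟨hw _ (T.anc_refl _) (T.anc_refl _), hw _ (T.anc_refl _) (T.anc_refl _), .rfl⟩
  | succ n ih =>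
    have hab : T.Anc a (T.par b) := ⟨n, hn⟩
    have hab' : T.Anc a b := ⟨n + 1, hn⟩
    by_cases hba : b = a
    · subst hba
      exact ⟨hw _ (T.anc_refl _) (T.anc_refl _), hw _ (T.anc_refl _) (T.anc_refl _), .rfl⟩
    have h1 : T.Q w u (T.par b) a := ih
      (fun z h h' => hw z h (T.anc_trans h' (T.anc_par b)))
      (fun z h h' => hu z h (T.anc_trans h' (T.anc_par b))) hn
    refine T.Q_trans (T.Q_adj (hw _ hab' (T.anc_refl _)) (hw _ hab (T.anc_par b)) (T.par_adj b ?_) ?_) h1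
    · rintro rfl
      exact hba (by rw [← hn, T.iter_root])
    · have hbu := hu b hab' (T.anc_refl _) hba
      intro he
      rw [Sym2.eq_iff] at he
      rcases he with ⟨h, _⟩ | ⟨h, h'⟩
      · exact hbu h
      · apply hbu
        apply T.anc_antisymm
        · rw [h]; exact T.anc_par u
        · rw [← h']; exact T.anc_par b

lemma exists_cross {W : Type*} {G : SimpleGraph W} {a b : W} (S : Set W)
    (h : G.Reachable a b) (ha : a ∈ S) (hb : b ∉ S) : ∃ x y, x ∈ S ∧ y ∉ S ∧ G.Adj x y := by
  obtain ⟨p⟩ := h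
  obtain ⟨d, -, h1, h2⟩ := p.exists_boundary_dart S ha hb
  exact ⟨d.fst, d.snd, h1, h2, d.adj⟩

lemma par_ne {v : V} (h : v ≠ r) : v ≠ T.par v := (T.par_adj v h).ne

lemma not_anc_par {v : V} (h : v ≠ r) : ¬ T.Anc v (T.par v) := fun h' =>
  T.par_ne h (T.anc_antisymm h' (T.anc_par v))

lemma mset_nonempty (hH : TwoVertexConnected H) {u w : V} (hu : u ≠ r) (hw : T.PAnc u w) :
    ∃ x, x ∈ T.MSet u := by
  have hcon := (hH.2.2 u).preconnected ⟨w, hw.2.symm⟩ ⟨T.par u, (T.par_ne hu).symm⟩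
  obtain ⟨⟨x, hx⟩, ⟨y, hy⟩, hxS, hyS, hadj⟩ :=
    exists_cross {v : {v | v ≠ u} | T.Anc u v.1} hcon hw.1 (T.not_anc_par hu)
  simp only [Set.mem_setOf_eq] at hx hy hxS hyS
  have hadj : H.Adj x y := hadj
  have hyx : T.Anc y x := by
    rcases T.edge_anc x y hadj with h | h
    · exact h
    · exact absurd (T.anc_trans hxS h) hyS
  refine ⟨x, hxS, y, ⟨?_, hy⟩, hadj, hyx, ?_⟩
  · rcases T.anc_total hyx hxS with h | h
    · exact h
    · exact absurd h hyS
  · rintro rfl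
    exact hyS (T.anc_of_ne hxS (Ne.symm hx))

lemma connected_of_Q (hH : TwoVertexConnected H) {u w : V}
    (h : u ≠ w → T.par u ≠ w → T.Q w u u (T.par u)) :
    ((H.deleteEdges {s(u, T.par u)}).induce {v | v ≠ w}).Connected := by
  have hc := hH.2.2 w
  have := hc.nonempty
  refine ⟨?_⟩
  intro a b
  obtain ⟨p⟩ := hc.preconnected a b
  induction p with
  | nil => exact .rfl
  | @cons x y z hxy _ ih =>
    refine SimpleGraph.Reachable.trans ?_ ih
    have hadj : H.Adj x.1 y.1 := hxy
    by_cases he : s(x.1, y.1) = s(u, T.par u)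
    · rw [Sym2.eq_iff] at he
      rcases he with ⟨h1, h2⟩ | ⟨h1, h2⟩
      · obtain ⟨_, _, q⟩ := h (h1 ▸ x.2) (h2 ▸ y.2)
        convert q
      · obtain ⟨_, _, q⟩ := h (h2 ▸ y.2) (h1 ▸ x.2)
        convert q.symm
    · obtain ⟨_, _, q⟩ := T.Q_adj x.2 y.2 hadj he
      exact q

end DFSTree

theorem stmt_12 {V : Type*} [Fintype V] (H : SimpleGraph V) (r : V)
    (T : DFSTree H r) (hH : TwoVertexConnected H) (c u mu mpc hpc : V)
    (hc : c ≠ r) (hu : u ≠ r)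
    (hmu : T.IsM u mu) (hmpc : T.IsMp c mpc) (hhpc : T.IsHighP c hpc) :
    (VECutPair H (T.par c) s(u, T.par u) → T.Anc u (T.par c) → T.Anc c mu →
      mpc = mu ∧ T.PAnc hpc u) ∧
    (T.PAnc u (T.par c) → mpc = mu → T.PAnc hpc u →
      VECutPair H (T.par c) s(u, T.par u)) := by
  have hcw := T.not_anc_par hc
  have hwc := T.anc_par c
  constructor
  · rintro ⟨-, hcut⟩ huw hcmu
    have hne : u ≠ T.par c := by
      intro h
      exact hcut (T.connected_of_Q hH (fun h' => absurd h h'))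
    obtain ⟨z, hz⟩ := T.mset_nonempty hH hu ⟨huw, hne⟩
    have hsub : ∀ x ∈ T.MSet u, T.Anc c x := fun x hx => T.anc_trans hcmu (hmu.1 x hx)
    have huc := T.anc_trans huw hwc
    have hdesc : ∀ x, T.Anc c x → x ≠ T.par c ∧ ¬ T.Anc x u := by
      intro x hx
      refine ⟨fun h => hcw (h ▸ hx), fun h => hcw (T.anc_trans hx (T.anc_trans h huw))⟩
    have hsubtree : ∀ x, T.Anc c x → T.Q (T.par c) u x c := by
      intro x hx
      exact T.Q_path hx (fun z h _ => (hdesc z h).1)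
        (fun z h _ _ h' => (hdesc z h).2 (h' ▸ T.anc_refl _))
    have hedge : ∀ x y, T.Anc c x → y ≠ T.par c → H.Adj x y → T.Q (T.par c) u x y := by
      intro x y hx hy hxy
      refine T.Q_adj (hdesc x hx).1 hy hxy ?_
      intro he
      rw [Sym2.eq_iff] at he
      rcases he with ⟨h, _⟩ | ⟨h, _⟩
      · exact (hdesc x hx).2 (h ▸ T.anc_refl _)
      · exact (hdesc x hx).2 (h ▸ T.anc_par _)
    have key : ∀ x y, T.Anc c x → T.PAnc y (T.par c) → T.BackEdge x y → T.PAnc y u := by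
      intro x y hx hy hxy
      by_contra hcon
      have huy : T.Anc u y := by
        rcases T.anc_total hy.1 huw with h | h
        · by_cases h' : y = u
          · exact h' ▸ T.anc_refl _
          · exact absurd ⟨h, h'⟩ hcon
        · exact h
      apply hcut
      refine T.connected_of_Q hH (fun _ _ => ?_)
      obtain ⟨-, y', hy', hzy'⟩ := id hz
      have q1 : T.Q (T.par c) u y u := T.Q_path huy
        (fun z _ h2 h3 => hy.2 (T.anc_antisymm hy.1 (h3 ▸ h2))) (fun z _ _ h => h)
      have q2 := hedge x y hx hy.2 hxy.1
      have q3 := hedge z y' (hsub z hz)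
        (fun h => hne (T.anc_antisymm huw (h ▸ hy'.1))) hzy'.1
      have q4 : T.Q (T.par c) u (T.par u) y' := T.Q_path (T.anc_of_ne hy'.1 hy'.2)
        (fun z _ h2 h3 => T.not_anc_par hu (T.anc_trans huw (h3 ▸ h2)))
        (fun z _ h2 _ h3 => T.not_anc_par hu (h3 ▸ h2))
      have q5 := T.Q_trans (hsubtree x hx) (T.Q_symm (hsubtree z (hsub z hz)))
      exact T.Q_trans (T.Q_symm q1) (T.Q_trans (T.Q_symm q2)
        (T.Q_trans q5 (T.Q_trans q3 (T.Q_symm q4))))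
    have hset : T.MpSet c = T.MSet u := by
      ext x
      constructor
      · rintro ⟨hx, y, hy, hxy⟩
        exact ⟨T.anc_trans huc hx, y, key x y hx hy hxy, hxy⟩
      · intro hx
        obtain ⟨_, y, hy, hxy⟩ := id hx
        exact ⟨hsub x hx, y, ⟨T.anc_trans hy.1 huw,
          fun h => hne (T.anc_antisymm huw (h ▸ hy.1))⟩, hxy⟩
    constructor
    · unfold DFSTree.IsMp at hmpc
      rw [hset] at hmpc
      exact T.anc_antisymm (hmu.2 _ hmpc.1) (hmpc.2 _ hmu.1)
    · obtain ⟨h1, ⟨x, hx, hxy⟩, -⟩ := hhpc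
      exact key x hpc hx h1 hxy
  · rintro ⟨huw, hne⟩ rfl hhu
    refine ⟨T.par_adj u hu, fun hcon => ?_⟩
    have hcm : T.Anc c mpc := hmpc.2 c (fun x hx => hx.1)
    have hsub : ∀ x ∈ T.MSet u, T.Anc c x := fun x hx => T.anc_trans hcm (hmu.1 x hx)
    have hpu : T.par u ≠ T.par c := fun h => T.not_anc_par hu (h ▸ huw)
    obtain ⟨⟨a, ha⟩, ⟨b, hb⟩, haS, hbS, hadj⟩ :=
      DFSTree.exists_cross {v : {v | v ≠ T.par c} | T.Anc u v.1 ∧ ¬ T.Anc c v.1}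
        (hcon.preconnected ⟨u, hne⟩ ⟨T.par u, hpu⟩)
        ⟨T.anc_refl _, fun h => hcw (T.anc_trans h huw)⟩
        (fun h => T.not_anc_par hu h.1)
    have hadj' : H.Adj a b ∧ s(a, b) ≠ s(u, T.par u) := by
      simp only [SimpleGraph.comap_adj, SimpleGraph.induce, SimpleGraph.deleteEdges_adj] at hadj
      exact hadj
    obtain ⟨hab, hes⟩ := hadj'
    simp only [Set.mem_setOf_eq] at ha hb haS hbS
    obtain ⟨hua, hca⟩ := haS
    by_cases hcb : T.Anc c b
    · have hanc : T.Anc a b := by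
        rcases T.edge_anc a b hab with h | h
        · exact absurd (T.anc_trans hcb h) hca
        · exact h
      have hac : T.Anc a c := (T.anc_total hanc hcb).resolve_right hca
      have hac' : a ≠ c := fun h => hca (h ▸ T.anc_refl _)
      have haw := T.anc_of_ne hac hac'
      have hbe : T.BackEdge b a := by
        refine ⟨hab.symm, hanc, fun h => ?_⟩
        by_cases hbc : c = b
        · exact ha (by rw [← h, hbc])
        · exact hca (h ▸ T.anc_of_ne hcb hbc)
      have := hhpc.2.2 a ⟨haw, ha⟩ ⟨b, hcb, hbe⟩
      exact hhu.2 (T.anc_antisymm hhu.1 (T.anc_trans hua this))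
    · have hub : ¬ T.Anc u b := fun h => hbS ⟨h, hcb⟩
      have hanc : T.Anc b a := by
        rcases T.edge_anc a b hab with h | h
        · exact h
        · exact absurd (T.anc_trans hua h) hub
      have hbu : T.Anc b u := (T.anc_total hanc hua).resolve_right hub
      by_cases hp : T.par a = b
      · by_cases hau : u = a
        · exact hes (by rw [← hp, hau])
        · exact hub (hp ▸ T.anc_of_ne hua hau)
      · exact hca (hsub a ⟨hua, b, ⟨hbu, fun h => hub (h ▸ T.anc_refl _)⟩, hab, hanc, hp⟩)
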